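/- Fix an integer f ≥ 1. Let Y be the formal power series in ℂ⟦X⟧ given by Y = -1 + Σ_{k=1}^∞ (-1)^{k(f+1)} · ((k·f + k - 2)! / ((k·f - 1)! · k!)) · X^k. Then X + Y^f + Y^{f+1} = 0 in ℂ⟦X⟧. -/

import Mathlib

/-!
The generalized binomial series `𝓑_t(X)^r` satisfy `𝓑_t^(r+1) = 𝓑_t^r + X 𝓑_t^(r+t)`, which is
Pascal's rule on coefficients. For integral `t`, such a recurrence determines a family of series
indexed by `r ∈ ℤ` from its member at `r = 0`, so these series multiply like powers of `𝓑_t`. At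
`r = 0`, `t = -f` the recurrence then becomes the trinomial equation `U^(f+1) = U^f + X` for
`U = 𝓑_{-f}(X)`, and the framed mirror curve is this equation after the substitution
`X ↦ (-1)^f X`, `Y = -U`.
-/

open PowerSeries

theorem eq_zero_of_shift_recurrence {R : Type*} [Semiring R] {F : ℤ → R⟦X⟧} {σ : ℤ → ℤ}
    (h_zero : F 0 = 0) (h_succ : ∀ r, F (r + 1) = F r + X * F (σ r)) : F = 0 := by
  have coeff_eq_zero (n : ℕ) (h_shift : ∀ r, coeff n (X * F (σ r)) = 0) (r : ℤ) :
      coeff n (F r) = 0 := by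
    have h_periodic : Function.Periodic (fun r => coeff n (F r)) 1 := fun r => by
      simp only [h_succ, map_add, h_shift, add_zero]
    simpa [h_zero] using h_periodic.int_mul_eq r
  suffices h_coeff : ∀ n r, coeff n (F r) = 0 from funext fun r => ext fun n => h_coeff n r
  intro n
  induction n with
  | zero => exact coeff_eq_zero 0 fun r => coeff_zero_X_mul _
  | succ n ih => exact coeff_eq_zero (n + 1) fun r => by rw [coeff_succ_X_mul, ih]

section BinomialRing

variable {R : Type*} [CommRing R] [BinomialRing R]

theorem choose_neg_natCast_add_one (n k : ℕ) :
    Ring.choose (-(n + 1 : R)) k = (-1) ^ k * (n + k).choose k := by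
  rw [Ring.choose_neg, show (n : R) + 1 + k - 1 = ((n + k : ℕ) : R) by push_cast; ring,
    Ring.choose_natCast]
  simp [Units.smul_def, Int.negOnePow_def]

/-- The coefficient `r / (r + k t) * choose (r + k t) k` of `X ^ k` in the generalized binomial
series `𝓑_t(X)^r` of Graham, Knuth and Patashnik, known from the Rothe–Hagen identity. The quotient
is cleared by `k * choose s k = s * choose (s - 1) (k - 1)` for `s = r + k t`, so that this
makes sense for all `r` and `t` in a binomial ring. -/
noncomputable def rotheCoeff (t r : R) : ℕ → R
  | 0 => 1
  | k + 1 => Ring.choose (r + (k + 1) * t) (k + 1) - t * Ring.choose (r + (k + 1) * t - 1) k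

theorem succ_mul_rotheCoeff_succ (t r : R) (k : ℕ) :
    (k + 1) * rotheCoeff t r (k + 1) = r * Ring.choose (r + (k + 1) * t - 1) k := by
  have absorption (s : R) : (k + 1) * Ring.choose s (k + 1) = s * Ring.choose (s - 1) k := by
    simpa [Ring.choose_one_right] using Ring.choose_smul_choose s (Nat.le_add_left 1 k)
  rw [rotheCoeff, mul_sub, absorption]
  ring

theorem rotheCoeff_zero_succ (t : R) (k : ℕ) : rotheCoeff t 0 (k + 1) = 0 := by
  have : IsAddTorsionFree R := BinomialRing.toIsAddTorsionFree
  rw [← nsmul_right_inj k.succ_ne_zero, nsmul_eq_mul]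
  simpa using succ_mul_rotheCoeff_succ t 0 k

theorem rotheCoeff_add_one_succ (t r : R) (k : ℕ) :
    rotheCoeff t (r + 1) (k + 1) = rotheCoeff t r (k + 1) + rotheCoeff t (r + t) k := by
  cases k with
  | zero =>
    simp only [rotheCoeff, zero_add, Ring.choose_one_right, Ring.choose_zero_right]
    ring
  | succ k =>
    simp only [rotheCoeff, Nat.cast_add_one]
    obtain ⟨s, hs⟩ : ∃ s, s = r + (k + 1 + 1) * t := ⟨_, rfl⟩
    rw [show r + 1 + (k + 1 + 1) * t = s + 1 by rw [hs]; ring,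
      show r + t + (k + 1) * t = s by rw [hs]; ring, ← hs,
      Ring.choose_succ_succ s, show s + 1 - 1 = s - 1 + 1 by ring, Ring.choose_succ_succ (s - 1)]
    ring

/-- The generalized binomial series `𝓑_t(X)^r`, with `r` kept as a parameter because a power series
has no `r`-th power for general `r`. -/
noncomputable def rotheSeries (t r : R) : R⟦X⟧ :=
  mk (rotheCoeff t r)

theorem rotheSeries_zero (t : R) : rotheSeries t 0 = 1 := by
  ext (_ | k)
  · simp [rotheSeries, rotheCoeff]
  · simp [rotheSeries, rotheCoeff_zero_succ, coeff_one]

theorem rotheSeries_add_one (t r : R) :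
    rotheSeries t (r + 1) = rotheSeries t r + X * rotheSeries t (r + t) := by
  ext (_ | k)
  · simp [rotheSeries, rotheCoeff]
  · simp [rotheSeries, rotheCoeff_add_one_succ, coeff_succ_X_mul]

theorem rotheSeries_intCast_add (t r : ℤ) (s : R) :
    rotheSeries (t : R) (r + s) = rotheSeries (t : R) r * rotheSeries (t : R) s := by
  let defect (r : ℤ) : R⟦X⟧ :=
    rotheSeries (t : R) (r + s) - rotheSeries (t : R) r * rotheSeries (t : R) s
  have defect_zero : defect 0 = 0 := by simp [defect, rotheSeries_zero]
  have defect_succ (r : ℤ) : defect (r + 1) = defect r + X * defect (r + t) := by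
    simp only [defect, Int.cast_add, Int.cast_one, add_right_comm _ _ s, rotheSeries_add_one]
    ring
  exact sub_eq_zero.mp (congrFun (eq_zero_of_shift_recurrence defect_zero defect_succ) r)

theorem rotheSeries_natCast (t : ℤ) (n : ℕ) :
    rotheSeries (t : R) n = rotheSeries (t : R) 1 ^ n := by
  induction n with
  | zero => rw [Nat.cast_zero, rotheSeries_zero, pow_zero]
  | succ n ih =>
    rw [Nat.cast_succ, ← Int.cast_natCast, rotheSeries_intCast_add, Int.cast_natCast, ih, pow_succ]

theorem rotheSeries_neg_natCast_pow_succ (f : ℕ) :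
    rotheSeries (-f : R) 1 ^ (f + 1) = rotheSeries (-f : R) 1 ^ f + X := by
  have h_pow : rotheSeries (-f : R) 1 ^ f = rotheSeries (-f : R) f := by
    simpa using (rotheSeries_natCast (R := R) (-f) f).symm
  have h_inv : rotheSeries (-f : R) f * rotheSeries (-f : R) (-f) = 1 := by
    simpa [rotheSeries_zero] using (rotheSeries_intCast_add (R := R) (-f) f (-f)).symm
  have h_base : rotheSeries (-f : R) 1 = 1 + X * rotheSeries (-f : R) (-f) := by
    simpa [rotheSeries_zero] using rotheSeries_add_one (-f : R) 0
  rw [pow_succ, h_pow, h_base]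
  linear_combination X * h_inv

theorem framedMirrorCurve_neg_rescale_rotheSeries (f : ℕ) :
    let Y := -rescale ((-1) ^ f) (rotheSeries (-f : R) 1)
    X + Y ^ f + Y ^ (f + 1) = 0 := by
  intro Y
  have h_curve : (-Y) ^ (f + 1) = (-Y) ^ f + (-1) ^ f * X := by
    simpa [Y] using congrArg (rescale ((-1 : R) ^ f)) (rotheSeries_neg_natCast_pow_succ f)
  have h_sign : ((-1) ^ f * (-1) ^ f : R⟦X⟧) = 1 := by rw [← mul_pow, neg_one_mul, neg_neg, one_pow]
  rw [neg_pow Y, neg_pow Y f, pow_succ (-1)] at h_curve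
  linear_combination (-(-1) ^ f) * h_curve - (X + Y ^ f + Y ^ (f + 1)) * h_sign

end BinomialRing

section Field

variable {K : Type*} [Field K] [CharZero K]

theorem rotheCoeff_neg_natCast_one {f k : ℕ} (hf : 1 ≤ f) (hk : 1 ≤ k) :
    rotheCoeff (-f : K) 1 k =
      (-1) ^ (k + 1) * (k * f + k - 2).factorial / ((k * f - 1).factorial * k.factorial) := by
  obtain ⟨m, rfl⟩ := Nat.exists_eq_add_of_le' hk
  obtain ⟨N, hN⟩ : ∃ N, (m + 1) * f = N + 1 := Nat.exists_eq_add_of_le' (Nat.mul_pos hk hf)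
  have h_choose : (m + 1) * rotheCoeff (-f : K) 1 (m + 1) = (-1) ^ m * (N + m).choose m := by
    have h_arg : 1 + ((m : K) + 1) * -f - 1 = -(N + 1) := by
      have hN' : ((m : K) + 1) * f = N + 1 := mod_cast hN
      linear_combination -hN'
    rw [succ_mul_rotheCoeff_succ, one_mul, h_arg, choose_neg_natCast_add_one]
  have h_fact : ((N + m).choose m : K) = (N + m).factorial / (N.factorial * m.factorial) := by
    rw [← Nat.choose_symm_add, Nat.cast_add_choose]
  rw [show (m + 1) * f + (m + 1) - 2 = N + m by lia, show (m + 1) * f - 1 = N by lia,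
    eq_div_of_mul_eq m.cast_add_one_ne_zero ((mul_comm _ _).trans h_choose), h_fact,
    Nat.factorial_succ]
  push_cast
  field

theorem stmt0_general (f : ℕ) (hf : 1 ≤ f) (Y : K⟦X⟧)
    (hY : Y = mk fun k => if k = 0 then (-1 : K) else
      (-1 : K) ^ (k * (f + 1)) * (Nat.factorial (k * f + k - 2) : K) /
        ((Nat.factorial (k * f - 1) : K) * (Nat.factorial k : K))) :
    X + Y ^ f + Y ^ (f + 1) = 0 := by
  suffices hY' : Y = -rescale ((-1) ^ f) (rotheSeries (-f : K) 1) from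
    hY' ▸ framedMirrorCurve_neg_rescale_rotheSeries f
  ext k
  simp only [hY, rotheSeries, coeff_mk, map_neg, coeff_rescale]
  rcases k.eq_zero_or_pos with rfl | hk
  · simp [rotheCoeff]
  · rw [if_neg hk.ne', rotheCoeff_neg_natCast_one hf hk]
    ring

end Field

/-- The Lagrange-inversion power series solution `Y(X)` of the framed mirror curve
`X + Y^f + Y^(f+1) = 0` of `ℂ³` around `X = 0`, `Y = -1`, for framing `f ≥ 1`. -/
theorem stmt0 (f : ℕ) (hf : 1 ≤ f)
    (Y : PowerSeries ℂ)
    (hY : Y = PowerSeries.mk fun k => if k = 0 then (-1 : ℂ) else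
      (-1 : ℂ) ^ (k * (f + 1)) *
        (Nat.factorial (k * f + k - 2) : ℂ) /
        ((Nat.factorial (k * f - 1) : ℂ) * (Nat.factorial k : ℂ))) :
    PowerSeries.X + Y ^ f + Y ^ (f + 1) = 0 :=
  stmt0_general f hf Y hY
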